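/- Under the setup below, let u be a classical solution with initial datum φ ∈ L²(D) and such that t ↦ ‖u(t,·,·)‖²_{L²(D)} is absolutely continuous on [0,T]. Then for every t ∈ (0,T], ‖u(t,·,·)‖²_{L²(D)} + 2 J^α( s ↦ ‖∇_x u(s,·,·)‖²_{L²(D)} )(t) + J^α( s ↦ ‖u_y(s,·,·)‖²_{L²(D)} )(t) ≤ ‖φ‖²_{L²(D)} + 2 L_ω² · J^α( s ↦ ‖u(s,·,·)‖²_{L²(D)} )(t) + J^α c₂(t), where L_ω² = ℓ₀² ‖ω‖²/‖ω′‖² + (3/2) f_M² ‖ω′‖² + ℓ₀ + 1/2 and c₂(t) = (1 + 2‖ω‖²/‖ω′‖²) ‖g(t,·,·,0)‖²_{L²(D)} + ‖a(t,·)‖²_{L²(G)}/‖ω′‖². -/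

import Mathlib

/-!
The energy estimate rests on the fractional analogue of `(v²)' = 2 v v'`. For a scalar function `v`
that is differentiable on `(0, t]` with integrable derivative,
`v(t)² - v(0)² ≤ J^α (2 v D^α v)(t)` (`sq_sub_sq_le_rlInt`). By Abel's identity
(`integral_abelKernel`), `Γ(α) Γ(1 - α)` times the left-hand side is the double integral of
`(t - s)^{α-1} (s - τ)^{-α} · 2 v(τ) v'(τ)` over `0 < τ < s < t`, and the right-hand side differs only
in that `v(s)` replaces `v(τ)`. For each fixed `s` the difference is nonnegative after an
integration by parts in `τ`; this is Alikhanov's inequality (`alikhanov`). Since the weighted double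
integrals converge absolutely as soon as `∂_t u` is integrable and `u` is bounded, the inequality can
be integrated over `D` (`integral_sq_sub_le_rlInt`), which gives
`‖u(t)‖² - ‖φ‖² ≤ J^α (∫_D 2 u D^α u)(t)`.

At almost every time `s` the function `u D^α u` is integrable over `D`. Multiplying the equation by
`2u` and integrating by parts, which is legitimate as `u(s)` is `C²` with compact support in `D`, turns
`∫_D 2 u D^α u` into `-2 ‖∇_x u‖² - 2 ‖u_y‖²` plus the reaction terms (`spatial_estimate`). For fixed
`x` these are estimated in `L²(0, π)` with Cauchy–Schwarz and Young's inequality so that exactly one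
copy of `‖u_y‖²` is absorbed (`section_estimate`). Applying `J^α` to the resulting inequality and
combining it with the fractional energy inequality (`energy_combine`) proves the theorem.
-/

open MeasureTheory Real

/-- Riemann–Liouville fractional integral of order `α` (with base point `0`). -/
noncomputable def rlInt (α : ℝ) (v : ℝ → ℝ) (t : ℝ) : ℝ :=
  (1 / Real.Gamma α) * ∫ τ in (0:ℝ)..t, (t - τ) ^ (α - 1) * v τ

/-- Caputo fractional derivative of order `α ∈ (0,1)` of an absolutely continuous
function whose a.e. derivative is `v'`. -/
noncomputable def caputo (α : ℝ) (v' : ℝ → ℝ) (t : ℝ) : ℝ :=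
  (1 / Real.Gamma (1 - α)) * ∫ τ in (0:ℝ)..t, (t - τ) ^ (-α) * v' τ

/-- Two-parameter Mittag-Leffler function (real arguments). -/
noncomputable def mittagLeffler (ρ μ z : ℝ) : ℝ :=
  ∑' k : ℕ, z ^ k / Real.Gamma (ρ * k + μ)

/-- The `L²(0,π)` inner product `(p,q) = ∫_0^π p q dy`. -/
noncomputable def l2ip (p q : ℝ → ℝ) : ℝ := ∫ y in Set.Ioo (0:ℝ) π, p y * q y

/-- The squared `L²(0,π)` norm `‖p‖² = ∫_0^π p² dy`. -/
noncomputable def l2sq (p : ℝ → ℝ) : ℝ := ∫ y in Set.Ioo (0:ℝ) π, (p y) ^ 2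

/-! ### The Abel kernel -/

/-- The kernel of the composition of `J^α` at time `t` with the integral operator
`ψ ↦ ∫_0^s (s - τ)^{-α} ψ(τ) dτ` of the Caputo derivative, as a function of the outer variable `s`
and the inner variable `τ`. It is cut off to `τ < s`, so that both variables can range over the
whole of `(0, t]`; the normalizing Gamma factors are omitted. -/
noncomputable def abelKernel (α t s τ : ℝ) : ℝ :=
  if τ < s then (t - s) ^ (α - 1) * (s - τ) ^ (-α) else 0

lemma abelKernel_nonneg {α t s τ : ℝ} (hs : s ≤ t) : 0 ≤ abelKernel α t s τ := by
  unfold abelKernel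
  split_ifs with h
  · exact mul_nonneg (Real.rpow_nonneg (by linarith) _) (Real.rpow_nonneg (by linarith) _)
  · exact le_rfl

lemma measurable_abelKernel (α t : ℝ) :
    Measurable (fun q : ℝ × ℝ => abelKernel α t q.1 q.2) := by
  unfold abelKernel
  refine Measurable.ite (measurableSet_lt measurable_snd measurable_fst) ?_ measurable_const
  exact ((measurable_const.sub measurable_fst).pow_const _).mul
    ((measurable_fst.sub measurable_snd).pow_const _)

/-- Abel's identity: the integral is `B(α, 1 - α) = Γ(α) Γ(1 - α)`, whatever `τ` and `t` are. It is
the reason why `J^α` inverts the Caputo derivative up to the initial value. -/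
lemma integral_abelKernel {α t τ : ℝ} (hα : 0 < α) (hα1 : α < 1) (hτ : 0 ≤ τ) (hτt : τ < t) :
    ∫ s in Set.Ioc 0 t, abelKernel α t s τ = Real.Gamma α * Real.Gamma (1 - α) := by
  have h1 : ∫ s in Set.Ioc 0 t, abelKernel α t s τ
      = ∫ s in τ..t, (t - s) ^ (α - 1) * (s - τ) ^ (-α) := by
    rw [intervalIntegral.integral_of_le hτt.le]
    have : (fun s => abelKernel α t s τ)
        = (Set.Ioi τ).indicator (fun s => (t - s) ^ (α - 1) * (s - τ) ^ (-α)) := by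
      ext s; simp [abelKernel, Set.indicator]
    rw [this, setIntegral_indicator measurableSet_Ioi]
    congr 2
    ext s; simp only [Set.mem_inter_iff, Set.mem_Ioc, Set.mem_Ioi]
    constructor
    · rintro ⟨⟨_, h⟩, h'⟩; exact ⟨h', h⟩
    · rintro ⟨h, h'⟩; exact ⟨⟨by linarith, h'⟩, h⟩
  have h2 : ∫ s in τ..t, (t - s) ^ (α - 1) * (s - τ) ^ (-α)
      = ∫ x in (0:ℝ)..(t - τ), x ^ (-α) * ((t - τ) - x) ^ (α - 1) := by
    have := intervalIntegral.integral_comp_sub_right (a := τ) (b := t)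
      (fun x => x ^ (-α) * ((t - τ) - x) ^ (α - 1)) τ
    rw [sub_self] at this
    rw [← this]
    congr 1; ext s; rw [mul_comm]; congr 2; ring
  rw [h1, h2]
  have ha : 0 < t - τ := by linarith
  -- Mathlib has the Beta integral over `ℂ`
  have h3 := Complex.betaIntegral_scaled ((1 - α : ℝ) : ℂ) (α : ℂ) ha
  have h4 := Complex.Gamma_mul_Gamma_eq_betaIntegral (s := ((1 - α : ℝ) : ℂ)) (t := (α : ℂ))
    (by simp; linarith) (by simpa using hα)
  have h5 : (((1 - α : ℝ) : ℂ) + (α : ℂ)) = 1 := by push_cast; ring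
  rw [h5] at h3 h4
  simp only [sub_self, Complex.cpow_zero, one_mul, Complex.Gamma_one] at h3 h4
  rw [← h4] at h3
  have h6 : ((∫ x in (0:ℝ)..(t - τ), x ^ (-α) * ((t - τ) - x) ^ (α - 1) : ℝ) : ℂ)
      = ∫ x in (0:ℝ)..(t - τ), (x : ℂ) ^ (((1 - α : ℝ) : ℂ) - 1)
          * (((t - τ : ℝ) : ℂ) - x) ^ ((α : ℂ) - 1) := by
    rw [← intervalIntegral.integral_ofReal]
    apply intervalIntegral.integral_congr
    intro x hx
    rw [Set.uIcc_of_le ha.le] at hx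
    simp only
    rw [Complex.ofReal_mul, Complex.ofReal_cpow hx.1, Complex.ofReal_cpow (by linarith [hx.2])]
    congr 2 <;> push_cast <;> ring
  rw [← h6, Complex.Gamma_ofReal, Complex.Gamma_ofReal] at h3
  rw [mul_comm (Real.Gamma α)]
  exact_mod_cast h3

lemma integrable_abelKernel {α t τ : ℝ} (hα : 0 < α) (hα1 : α < 1) (hτ : 0 ≤ τ) (hτt : τ < t) :
    IntegrableOn (fun s => abelKernel α t s τ) (Set.Ioc 0 t) := by
  -- a non-integrable function would have integral `0`, while the value is positive
  by_contra h
  have h1 := integral_abelKernel hα hα1 hτ hτt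
  rw [integral_undef h] at h1
  have := mul_pos (Real.Gamma_pos_of_pos hα) (Real.Gamma_pos_of_pos (sub_pos.2 hα1))
  linarith

/-- Tonelli for the Abel kernel against an integrable density. The variable `y` carries the inner
time `θ y` together with possible further parameters. -/
lemma integrable_abelKernel_prod {Y : Type*} [MeasurableSpace Y] {ν : Measure Y} [SFinite ν]
    {α t : ℝ} (hα : 0 < α) (hα1 : α < 1) {θ : Y → ℝ} (hθ : Measurable θ)
    (hθ' : ∀ᵐ y ∂ν, 0 ≤ θ y ∧ θ y < t) {ψ : Y → ℝ} (hψ : Integrable ψ ν) :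
    Integrable (fun q : ℝ × Y => abelKernel α t q.1 (θ q.2) * ψ q.2)
      ((volume.restrict (Set.Ioc 0 t)).prod ν) := by
  have hm : AEStronglyMeasurable (fun q : ℝ × Y => abelKernel α t q.1 (θ q.2) * ψ q.2)
      ((volume.restrict (Set.Ioc 0 t)).prod ν) := by
    refine AEStronglyMeasurable.mul ?_ hψ.1.comp_snd
    exact ((measurable_abelKernel α t).comp
      (measurable_fst.prodMk (hθ.comp measurable_snd))).aestronglyMeasurable
  rw [integrable_prod_iff' hm]
  constructor
  · filter_upwards [hθ'] with y hy
    exact (integrable_abelKernel hα hα1 hy.1 hy.2).mul_const _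
  · refine (hψ.norm.const_mul (Real.Gamma α * Real.Gamma (1 - α))).congr ?_
    filter_upwards [hθ'] with y hy
    rw [← integral_abelKernel hα hα1 hy.1 hy.2, ← integral_mul_const]
    refine setIntegral_congr_fun measurableSet_Ioc fun s hs => ?_
    simp only [norm_mul, Real.norm_of_nonneg (abelKernel_nonneg hs.2)]

lemma integral_abelKernel_prod {Y : Type*} [MeasurableSpace Y] {ν : Measure Y} [SFinite ν]
    {α t : ℝ} (hα : 0 < α) (hα1 : α < 1) {θ : Y → ℝ} (hθ : Measurable θ)
    (hθ' : ∀ᵐ y ∂ν, 0 ≤ θ y ∧ θ y < t) {ψ : Y → ℝ} (hψ : Integrable ψ ν) :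
    ∫ q, abelKernel α t q.1 (θ q.2) * ψ q.2 ∂((volume.restrict (Set.Ioc 0 t)).prod ν)
      = Real.Gamma α * Real.Gamma (1 - α) * ∫ y, ψ y ∂ν := by
  rw [integral_prod_symm _ (integrable_abelKernel_prod hα hα1 hθ hθ' hψ), ← integral_const_mul]
  refine integral_congr_ae ?_
  filter_upwards [hθ'] with y hy
  rw [← integral_abelKernel hα hα1 hy.1 hy.2, ← integral_mul_const]

/-! ### The fractional energy inequality -/

/-- Alikhanov's inequality `D^α (v²) ≤ 2 v D^α v` at time `s`, up to the factor `Γ(1 - α)` and with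
both sides written as one integral. The integrand is `-d/dτ [(s - τ)^{-α} (v(s) - v(τ))²]` plus the
nonnegative term `α (s - τ)^{-α-1} (v(s) - v(τ))²`, and the boundary term at `τ = s` vanishes
because `v` is differentiable there. No integrability is assumed: a divergent integral is `0` by
convention, which is also nonnegative. -/
lemma alikhanov {α s : ℝ} (hα : 0 < α) (hα1 : α < 1) (hs : 0 < s) {v v' : ℝ → ℝ}
    (hc : ContinuousOn v (Set.Icc 0 s)) (hd : ∀ τ ∈ Set.Ioc 0 s, HasDerivAt v (v' τ) τ) :
    0 ≤ ∫ τ in (0:ℝ)..s, (s - τ) ^ (-α) * (2 * (v s - v τ) * v' τ) := by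
  by_cases hi : IntervalIntegrable (fun τ => (s - τ) ^ (-α) * (2 * (v s - v τ) * v' τ)) volume 0 s
  swap
  · rw [intervalIntegral.integral_undef hi]
  have hi' : IntegrableOn (fun τ => (s - τ) ^ (-α) * (2 * (v s - v τ) * v' τ)) (Set.Icc 0 s) := by
    rw [integrableOn_Icc_iff_integrableOn_Ioc]
    exact (intervalIntegrable_iff_integrableOn_Ioc_of_le hs.le).1 hi
  have hcont : ContinuousOn (fun τ => -((s - τ) ^ (-α) * (v s - v τ) ^ 2)) (Set.Icc 0 s) := by
    intro τ hτ
    rcases hτ.2.eq_or_lt with rfl | hlt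
    -- at the right end point, `(s - r)^{-α} (v s - v r)² = O((s - r)^{2 - α})`
    · have hO : (fun r => v τ - v r) =O[nhdsWithin τ (Set.Icc 0 τ)] (fun r => τ - r) := by
        have := (hd τ ⟨hs, le_rfl⟩).isBigO_sub.neg_left.neg_right
        simp only [neg_sub] at this
        exact this.mono nhdsWithin_le_nhds
      have hO2 : (fun r => (τ - r) ^ (-α) * (v τ - v r) ^ 2) =O[nhdsWithin τ (Set.Icc 0 τ)]
          (fun r => (τ - r) ^ (-α) * (τ - r) ^ 2) :=
        (Asymptotics.isBigO_refl _ _).mul (hO.pow 2)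
      have hlim : Filter.Tendsto (fun r => (τ - r) ^ (-α) * (τ - r) ^ 2)
          (nhdsWithin τ (Set.Icc 0 τ)) (nhds 0) := by
        have h1 : ContinuousWithinAt (fun r : ℝ => (τ - r) ^ (2 - α)) (Set.Icc 0 τ) τ := by
          apply ContinuousAt.continuousWithinAt
          apply ContinuousAt.rpow_const (by fun_prop)
          right; linarith
        have h2 := h1.tendsto
        simp only [sub_self] at h2
        rw [Real.zero_rpow (by linarith)] at h2
        refine h2.congr' ?_
        filter_upwards [self_mem_nhdsWithin] with r hr
        rcases hr.2.eq_or_lt with rfl | hrl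
        · simp [Real.zero_rpow (show 2 - α ≠ 0 by linarith)]
        · rw [← Real.rpow_natCast, ← Real.rpow_add (by linarith)]
          congr 1; push_cast; ring
      have h3 := (hO2.trans_tendsto hlim).neg
      unfold ContinuousWithinAt
      simpa using h3
    · have hv : ContinuousWithinAt v (Set.Icc 0 s) τ := hc τ hτ
      have h1 : ContinuousAt (fun r : ℝ => (s - r) ^ (-α)) τ :=
        ContinuousAt.rpow_const (by fun_prop) (Or.inl (by linarith))
      exact (h1.continuousWithinAt.mul ((continuousWithinAt_const.sub hv).pow 2)).neg
  have key := intervalIntegral.sub_le_integral_of_hasDeriv_right_of_le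
    (g' := fun τ => -((-1 * (-α) * (s - τ) ^ (-α - 1)) * (v s - v τ) ^ 2
      + (s - τ) ^ (-α) * (2 * (v s - v τ) ^ (2 - 1) * (-(v' τ))))) hs.le hcont
    (fun τ hτ => by
      have h1 : HasDerivAt (fun r : ℝ => (s - r) ^ (-α)) (-1 * (-α) * (s - τ) ^ (-α - 1)) τ := by
        have h0 : HasDerivAt (fun r : ℝ => s - r) (-1) τ := by
          simpa using (hasDerivAt_id τ).const_sub s
        exact h0.rpow_const (Or.inl (by linarith [hτ.2]))
      have h2 : HasDerivAt (fun r : ℝ => (v s - v r) ^ 2)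
          (2 * (v s - v τ) ^ (2 - 1) * (-(v' τ))) τ := by
        simpa using ((hd τ ⟨hτ.1, hτ.2.le⟩).const_sub (v s)).fun_pow 2
      exact (h1.mul h2).neg.hasDerivWithinAt) hi'
    (fun τ hτ => by
      have h1 : 0 ≤ (s - τ) ^ (-α - 1) := Real.rpow_nonneg (by linarith [hτ.2]) _
      have h2 : 0 ≤ α * (s - τ) ^ (-α - 1) * (v s - v τ) ^ 2 := by positivity
      have h3 : (v s - v τ) ^ (2 - 1) = v s - v τ := by norm_num
      simp only [h3]
      nlinarith)
  have h0 : 0 ≤ (s - 0) ^ (-α) * (v s - v 0) ^ 2 :=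
    mul_nonneg (Real.rpow_nonneg (by linarith) _) (sq_nonneg _)
  simp only [sub_self] at key
  linarith

lemma ae_Ioc_lt (t : ℝ) : ∀ᵐ τ ∂(volume.restrict (Set.Ioc 0 t)), 0 ≤ τ ∧ τ < t := by
  rw [← restrict_Ioo_eq_restrict_Ioc]
  filter_upwards [ae_restrict_mem measurableSet_Ioo] with τ hτ
  exact ⟨hτ.1.le, hτ.2⟩

lemma setIntegral_abelKernel_mul {α t s : ℝ} (hs : s ∈ Set.Ioc 0 t) (ψ : ℝ → ℝ) :
    ∫ τ in Set.Ioc 0 t, abelKernel α t s τ * ψ τ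
      = (t - s) ^ (α - 1) * ∫ τ in (0:ℝ)..s, (s - τ) ^ (-α) * ψ τ := by
  rw [intervalIntegral.integral_of_le hs.1.le, integral_Ioc_eq_integral_Ioo (y := s),
    ← integral_const_mul]
  have : (fun τ => abelKernel α t s τ * ψ τ)
      = (Set.Iio s).indicator (fun τ => (t - s) ^ (α - 1) * ((s - τ) ^ (-α) * ψ τ)) := by
    ext τ
    by_cases h : τ < s
    · simp [abelKernel, h, mul_assoc]
    · simp [abelKernel, h]
  rw [this, setIntegral_indicator measurableSet_Iio]
  congr 2
  ext τ; simp only [Set.mem_inter_iff, Set.mem_Ioc, Set.mem_Iio, Set.mem_Ioo]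
  constructor
  · rintro ⟨⟨h, _⟩, h'⟩; exact ⟨h, h'⟩
  · rintro ⟨h, h'⟩; exact ⟨⟨h, by linarith [hs.2]⟩, h'⟩

lemma setIntegral_abelKernel_caputo {α t s : ℝ} (hα1 : α < 1) (hs : s ∈ Set.Ioc 0 t)
    (ψ : ℝ → ℝ) :
    ∫ τ in Set.Ioc 0 t, abelKernel α t s τ * ψ τ
      = (t - s) ^ (α - 1) * (Real.Gamma (1 - α) * caputo α ψ s) := by
  rw [setIntegral_abelKernel_mul hs, caputo, ← mul_assoc (Real.Gamma (1 - α)),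
    mul_one_div_cancel (Real.Gamma_pos_of_pos (sub_pos.2 hα1)).ne', one_mul]

/-- Scalar fractional energy inequality `v(t)² - v(0)² ≤ J^α (2 v D^α v)(t)`. Abel's identity writes
`Γ(α) Γ(1 - α) (v(t)² - v(0)²)` as the double integral of the Abel kernel against `2 v(τ) v'(τ)`;
replacing `v(τ)` by `v(s)` gives the right-hand side, and `alikhanov` compares the two for each `s`. -/
lemma sq_sub_sq_le_rlInt {α t : ℝ} (hα : 0 < α) (hα1 : α < 1) (ht : 0 < t) {v v' : ℝ → ℝ}
    (hc : ContinuousOn v (Set.Icc 0 t)) (hd : ∀ τ ∈ Set.Ioc 0 t, HasDerivAt v (v' τ) τ)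
    (hi : IntegrableOn v' (Set.Ioc 0 t)) :
    v t ^ 2 - v 0 ^ 2 ≤ rlInt α (fun s => 2 * (v s * caputo α v' s)) t := by
  have hG : 0 < Real.Gamma α := Real.Gamma_pos_of_pos hα
  have hG1 : 0 < Real.Gamma (1 - α) := Real.Gamma_pos_of_pos (sub_pos.2 hα1)
  obtain ⟨C, hC⟩ := isCompact_Icc.exists_bound_of_continuousOn hc
  have hvm : AEStronglyMeasurable v (volume.restrict (Set.Ioc 0 t)) :=
    (hc.mono Set.Ioc_subset_Icc_self).aestronglyMeasurable measurableSet_Ioc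
  have hvb : ∀ᵐ τ ∂(volume.restrict (Set.Ioc 0 t)), ‖v τ‖ ≤ C := by
    filter_upwards [ae_restrict_mem measurableSet_Ioc] with τ hτ
    exact hC τ (Set.Ioc_subset_Icc_self hτ)
  have hvv : Integrable (fun τ => 2 * (v τ * v' τ)) (volume.restrict (Set.Ioc 0 t)) :=
    (hi.bdd_mul hvm hvb).const_mul 2
  have hFTC : ∫ τ in Set.Ioc 0 t, 2 * (v τ * v' τ) = v t ^ 2 - v 0 ^ 2 := by
    rw [← intervalIntegral.integral_of_le ht.le]
    refine intervalIntegral.integral_eq_sub_of_hasDerivAt_of_le ht.le (f := fun τ => v τ ^ 2)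
      (hc.pow 2) (fun τ hτ => ?_)
      ((intervalIntegrable_iff_integrableOn_Ioc_of_le ht.le).2 hvv)
    have := (hd τ ⟨hτ.1, hτ.2.le⟩).fun_pow 2
    simpa [mul_assoc] using this
  -- the two double integrals, with `v` evaluated at the outer and at the inner variable
  have hA : Integrable (fun q : ℝ × ℝ => abelKernel α t q.1 q.2 * v' q.2 * (2 * v q.1))
      ((volume.restrict (Set.Ioc 0 t)).prod (volume.restrict (Set.Ioc 0 t))) := by
    refine (integrable_abelKernel_prod hα hα1 measurable_id (ae_Ioc_lt t) hi).mul_bdd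
      (c := 2 * C) (hvm.comp_fst.const_mul 2) ?_
    have := Measure.quasiMeasurePreserving_fst
      (μ := volume.restrict (Set.Ioc 0 t)) (ν := volume.restrict (Set.Ioc 0 t)) |>.ae hvb
    filter_upwards [this] with q hq
    rw [norm_mul, Real.norm_ofNat]
    linarith
  have hB := integrable_abelKernel_prod hα hα1 measurable_id (ae_Ioc_lt t) hvv
  have hBv := integral_abelKernel_prod hα hα1 measurable_id (ae_Ioc_lt t) hvv
  rw [hFTC] at hBv
  have hAv : ∫ q, abelKernel α t q.1 q.2 * v' q.2 * (2 * v q.1)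
      ∂((volume.restrict (Set.Ioc 0 t)).prod (volume.restrict (Set.Ioc 0 t)))
      = Real.Gamma α * Real.Gamma (1 - α) * rlInt α (fun s => 2 * (v s * caputo α v' s)) t := by
    rw [integral_prod _ hA, rlInt, intervalIntegral.integral_of_le ht.le]
    have : ∀ J : ℝ, Real.Gamma α * Real.Gamma (1 - α) * (1 / Real.Gamma α * J)
        = Real.Gamma (1 - α) * J := by intro J; field_simp
    rw [this, ← integral_const_mul]
    refine setIntegral_congr_fun measurableSet_Ioc fun s hs => ?_
    simp only
    rw [integral_mul_const, setIntegral_abelKernel_caputo hα1 hs]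
    ring
  have hdiff : 0 ≤ ∫ q, (abelKernel α t q.1 q.2 * v' q.2 * (2 * v q.1)
      - abelKernel α t q.1 (id q.2) * (2 * (v q.2 * v' q.2)))
      ∂((volume.restrict (Set.Ioc 0 t)).prod (volume.restrict (Set.Ioc 0 t))) := by
    rw [integral_prod (fun q : ℝ × ℝ => abelKernel α t q.1 q.2 * v' q.2 * (2 * v q.1)
      - abelKernel α t q.1 (id q.2) * (2 * (v q.2 * v' q.2))) (hA.sub hB)]
    refine setIntegral_nonneg measurableSet_Ioc fun s hs => ?_
    have : ∀ τ, abelKernel α t s τ * v' τ * (2 * v s)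
        - abelKernel α t s (id τ) * (2 * (v τ * v' τ))
        = abelKernel α t s τ * (2 * (v s - v τ) * v' τ) := by intro τ; simp only [id]; ring
    simp only [this]
    rw [setIntegral_abelKernel_mul hs]
    refine mul_nonneg (Real.rpow_nonneg (by linarith [hs.2]) _) ?_
    exact alikhanov hα hα1 hs.1 (hc.mono (Set.Icc_subset_Icc_right hs.2))
      (fun τ hτ => hd τ ⟨hτ.1, hτ.2.trans hs.2⟩)
  rw [integral_sub hA hB, hAv, hBv, ← mul_sub] at hdiff
  have := (mul_nonneg_iff_of_pos_left (mul_pos hG hG1)).1 hdiff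
  linarith

/-- For an integrable time derivative `w'` and a bounded `w`, the function `w D^α w` is integrable in
time and space against the weight of `J^α`. Hence the Caputo derivative needs no regularity beyond
the integrability of `w'` for the Fubini arguments that follow. -/
lemma integrable_kernel_mul_caputo {X : Type*} [MeasurableSpace X] {μ : Measure X} [SFinite μ]
    {α t : ℝ} (hα : 0 < α) (hα1 : α < 1) {w w' : ℝ → X → ℝ}
    (hw' : Integrable (fun q : ℝ × X => w' q.1 q.2) ((volume.restrict (Set.Ioc 0 t)).prod μ))
    (hwm : AEStronglyMeasurable (fun q : ℝ × X => w q.1 q.2)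
      ((volume.restrict (Set.Ioc 0 t)).prod μ)) {C : ℝ}
    (hwb : ∀ᵐ q ∂((volume.restrict (Set.Ioc 0 t)).prod μ), ‖w q.1 q.2‖ ≤ C) :
    Integrable (fun q : ℝ × X =>
      (t - q.1) ^ (α - 1) * (w q.1 q.2 * caputo α (fun s => w' s q.2) q.1))
      ((volume.restrict (Set.Ioc 0 t)).prod μ) := by
  have hG1 : 0 < Real.Gamma (1 - α) := Real.Gamma_pos_of_pos (sub_pos.2 hα1)
  have h1 : Integrable (fun q : X × ℝ => w' q.2 q.1)
      (μ.prod (volume.restrict (Set.Ioc 0 t))) := hw'.swap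
  have h2 := integrable_abelKernel_prod hα hα1 measurable_snd
    ((Measure.quasiMeasurePreserving_snd (μ := μ)).ae (ae_Ioc_lt t)) h1
  have h3 := ((measurePreserving_prodAssoc (volume.restrict (Set.Ioc 0 t)) μ
    (volume.restrict (Set.Ioc 0 t))).integrable_comp h2.1).2 h2
  have h4 := (h3.mul_bdd (hwm.comp_fst (ν := volume.restrict (Set.Ioc 0 t)))
    (Measure.quasiMeasurePreserving_fst.ae hwb)).integral_prod_left
  refine (h4.const_mul (Real.Gamma (1 - α))⁻¹).congr ?_
  have : ∀ᵐ q ∂((volume.restrict (Set.Ioc 0 t)).prod μ), q.1 ∈ Set.Ioc 0 t :=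
    Measure.quasiMeasurePreserving_fst.ae (ae_restrict_mem measurableSet_Ioc)
  filter_upwards [this] with q hq
  rw [integral_mul_const]
  have h5 := setIntegral_abelKernel_caputo hα1 hq (fun s => w' s q.2)
  have h6 : ∀ τ : ℝ, ((fun q : ℝ × X × ℝ => abelKernel α t q.1 q.2.2 * w' q.2.2 q.2.1)
      ∘ (MeasurableEquiv.prodAssoc : (ℝ × X) × ℝ ≃ᵐ ℝ × X × ℝ)) (q, τ)
      = abelKernel α t q.1 τ * w' τ q.2 := fun τ => rfl
  simp only [h6, h5]
  field_simp

/-- The inequality `sq_sub_sq_le_rlInt` integrated over the parameter `p`, with `J^α` and the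
`p`-integral interchanged. -/
lemma integral_sq_sub_le_rlInt {X : Type*} [MeasurableSpace X] {μ : Measure X} [SFinite μ]
    {α t : ℝ} (hα : 0 < α) (hα1 : α < 1) (ht : 0 < t) {w w' : ℝ → X → ℝ}
    (hw' : Integrable (fun q : ℝ × X => w' q.1 q.2) ((volume.restrict (Set.Ioc 0 t)).prod μ))
    (hwm : AEStronglyMeasurable (fun q : ℝ × X => w q.1 q.2)
      ((volume.restrict (Set.Ioc 0 t)).prod μ)) {C : ℝ}
    (hwb : ∀ᵐ q ∂((volume.restrict (Set.Ioc 0 t)).prod μ), ‖w q.1 q.2‖ ≤ C)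
    (hc : ∀ᵐ p ∂μ, ContinuousOn (fun s => w s p) (Set.Icc 0 t))
    (hd : ∀ᵐ p ∂μ, ∀ τ ∈ Set.Ioc 0 t, HasDerivAt (fun s => w s p) (w' τ p) τ)
    (hwt : Integrable (fun p => w t p ^ 2) μ) (hw0 : Integrable (fun p => w 0 p ^ 2) μ) :
    ∫ p, w t p ^ 2 ∂μ - ∫ p, w 0 p ^ 2 ∂μ
      ≤ rlInt α (fun s => ∫ p, 2 * (w s p * caputo α (fun s => w' s p) s) ∂μ) t := by
  have hint := (integrable_kernel_mul_caputo hα hα1 hw' hwm hwb).const_mul 2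
  rw [← integral_sub hwt hw0, rlInt, intervalIntegral.integral_of_le ht.le]
  have hswap : ∫ s in Set.Ioc 0 t, (t - s) ^ (α - 1)
        * ∫ p, 2 * (w s p * caputo α (fun s => w' s p) s) ∂μ
      = ∫ p, (∫ s in Set.Ioc 0 t, 2 * ((t - s) ^ (α - 1)
        * (w s p * caputo α (fun s => w' s p) s))) ∂μ := by
    rw [← integral_prod_symm _ hint, integral_prod _ hint]
    congr 1; ext s
    rw [← integral_const_mul]
    congr 1; ext p; ring
  rw [hswap, ← integral_const_mul]
  refine integral_mono_ae (hwt.sub hw0) (hint.integral_prod_right.const_mul _) ?_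
  filter_upwards [hc, hd, hw'.prod_left_ae] with p h1 h2 h3
  have := sq_sub_sq_le_rlInt hα hα1 ht h1 h2 h3
  rw [rlInt, intervalIntegral.integral_of_le ht.le] at this
  refine this.trans (le_of_eq ?_)
  congr 2; ext s; ring

/-- Applies `J^α` to a differential energy inequality `2 P + Q + I ≤ R`. Nothing is assumed about the
measurability of `P` and `Q`: if the weighted integral of one of them does not exist, its `rlInt` is
`0`, and since it is nonnegative the conclusion only becomes weaker. -/
lemma energy_combine {α t : ℝ} (hα : 0 < α) (ht : 0 < t) {P Q R I : ℝ → ℝ} {d : ℝ}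
    (hP : ∀ s, 0 ≤ P s) (hQ : ∀ s, 0 ≤ Q s)
    (hR : IntegrableOn (fun s => (t - s) ^ (α - 1) * R s) (Set.Ioc 0 t))
    (hI : IntegrableOn (fun s => (t - s) ^ (α - 1) * I s) (Set.Ioc 0 t))
    (hle : ∀ᵐ s ∂(volume.restrict (Set.Ioc 0 t)), 2 * P s + Q s + I s ≤ R s)
    (hd : d ≤ rlInt α I t) :
    d + 2 * rlInt α P t + rlInt α Q t ≤ rlInt α R t := by
  have hG : 0 < Real.Gamma α := Real.Gamma_pos_of_pos hα
  -- a nonnegative function may be replaced by one with integrable weighted product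
  have red : ∀ P : ℝ → ℝ, (∀ s, 0 ≤ P s) → ∃ P₁ : ℝ → ℝ, (∀ s, 0 ≤ P₁ s) ∧ (∀ s, P₁ s ≤ P s) ∧
      IntegrableOn (fun s => (t - s) ^ (α - 1) * P₁ s) (Set.Ioc 0 t) ∧
      rlInt α P t = rlInt α P₁ t := by
    intro P hP
    by_cases h : IntegrableOn (fun s => (t - s) ^ (α - 1) * P s) (Set.Ioc 0 t)
    · exact ⟨P, hP, fun _ => le_rfl, h, rfl⟩
    · refine ⟨fun _ => 0, fun _ => le_rfl, hP, by simp, ?_⟩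
      rw [rlInt, rlInt, intervalIntegral.integral_of_le ht.le, integral_undef h]
      simp
  obtain ⟨P₁, hP1, hPP, hPi, hPe⟩ := red P hP
  obtain ⟨Q₁, hQ1, hQQ, hQi, hQe⟩ := red Q hQ
  have key : 2 * (∫ s in Set.Ioc 0 t, (t - s) ^ (α - 1) * P₁ s)
      + (∫ s in Set.Ioc 0 t, (t - s) ^ (α - 1) * Q₁ s)
      + (∫ s in Set.Ioc 0 t, (t - s) ^ (α - 1) * I s)
      ≤ ∫ s in Set.Ioc 0 t, (t - s) ^ (α - 1) * R s := by
    have hPQ : IntegrableOn (fun s => 2 * ((t - s) ^ (α - 1) * P₁ s) + (t - s) ^ (α - 1) * Q₁ s)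
        (Set.Ioc 0 t) := (hPi.const_mul 2).add hQi
    rw [← integral_const_mul, ← integral_add (hPi.const_mul 2) hQi, ← integral_add hPQ hI]
    refine integral_mono_ae (hPQ.add hI) hR ?_
    filter_upwards [hle, ae_restrict_mem measurableSet_Ioc] with s hs hst
    have hk : 0 ≤ (t - s) ^ (α - 1) := Real.rpow_nonneg (by linarith [hst.2]) _
    have := mul_le_mul_of_nonneg_left
      (show 2 * P₁ s + Q₁ s + I s ≤ R s by linarith [hPP s, hQQ s]) hk
    linarith
  rw [hPe, hQe]
  simp only [rlInt, intervalIntegral.integral_of_le ht.le] at hd ⊢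
  have := mul_le_mul_of_nonneg_left key (one_div_nonneg.2 hG.le)
  linarith

/-! ### Estimates in `L²(0, π)` -/

lemma abs_setIntegral_mul_le_sqrt {X : Type*} [MeasurableSpace X] {μ : Measure X} {p q : X → ℝ}
    (hp : Integrable (fun x => p x ^ 2) μ) (hq : Integrable (fun x => q x ^ 2) μ)
    (hpq : Integrable (fun x => p x * q x) μ) :
    |∫ x, p x * q x ∂μ| ≤ √(∫ x, p x ^ 2 ∂μ) * √(∫ x, q x ^ 2 ∂μ) := by
  have h : ∀ c : ℝ, 0 ≤ (∫ x, q x ^ 2 ∂μ) * (c * c) + (2 * ∫ x, p x * q x ∂μ) * c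
      + ∫ x, p x ^ 2 ∂μ := by
    intro c
    have h1 : 0 ≤ ∫ x, ((c * c) * q x ^ 2 + (2 * c) * (p x * q x) + p x ^ 2) ∂μ :=
      integral_nonneg fun x => by
        have := sq_nonneg (c * q x + p x)
        simp only [Pi.zero_apply]; nlinarith
    have h2 : Integrable (fun x => (c * c) * q x ^ 2 + (2 * c) * (p x * q x)) μ :=
      (hq.const_mul _).add (hpq.const_mul _)
    rw [integral_add h2 hp, integral_add (hq.const_mul _) (hpq.const_mul _), integral_const_mul,
      integral_const_mul] at h1
    linarith
  have hd := discrim_le_zero h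
  rw [discrim] at hd
  rw [← Real.sqrt_mul (integral_nonneg fun x => sq_nonneg _)]
  exact Real.abs_le_sqrt (by nlinarith)

lemma integrableOn_Ioo_of_continuousOn {p : ℝ → ℝ} (hp : ContinuousOn p (Set.Icc 0 π)) :
    IntegrableOn p (Set.Ioo 0 π) :=
  (hp.integrableOn_compact isCompact_Icc).mono_set Set.Ioo_subset_Icc_self

lemma abs_setIntegral_mul_le {p q : ℝ → ℝ} (hp : ContinuousOn p (Set.Icc 0 π))
    (hq : ContinuousOn q (Set.Icc 0 π)) :
    |∫ y in Set.Ioo 0 π, p y * q y| ≤ √(l2sq p) * √(l2sq q) :=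
  abs_setIntegral_mul_le_sqrt (integrableOn_Ioo_of_continuousOn (hp.pow 2))
    (integrableOn_Ioo_of_continuousOn (hq.pow 2)) (integrableOn_Ioo_of_continuousOn (hp.mul hq))

lemma l2sq_nonneg (p : ℝ → ℝ) : 0 ≤ l2sq p := integral_nonneg fun _ => sq_nonneg _

lemma l2sq_abs (p : ℝ → ℝ) : l2sq (fun y => |p y|) = l2sq p := by simp [l2sq]

lemma l2sq_one : l2sq (fun _ => 1) = π := by
  simp [l2sq, Real.pi_pos.le]

/-- The Young inequalities behind the constants: `2 f_M n c ≤ f_M² V² n² + c² / V²` for each of the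
three summands `c` in the bound for `b`. Here `n, m, γ, W, V` stand for the norms of `u`, `u_y`,
`g(·,0)`, `ω`, `ω'`. -/
lemma young_sum {n m γ W V a b fM ℓ : ℝ} (hV : 0 < V)
    (hfn : 0 ≤ fM * n) (hb : b ≤ |a| + W * (γ + ℓ * n) + m * V) :
    2 * fM * b * n ≤ m ^ 2 + 3 * fM ^ 2 * V ^ 2 * n ^ 2 + a ^ 2 / V ^ 2
      + 2 * W ^ 2 / V ^ 2 * γ ^ 2 + 2 * (ℓ ^ 2 * W ^ 2 / V ^ 2) * n ^ 2 := by
  have h1 : 2 * (fM * n) * b ≤ 2 * (fM * n) * (|a| + W * (γ + ℓ * n) + m * V) :=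
    mul_le_mul_of_nonneg_left hb (by linarith)
  have hy : ∀ c : ℝ, 2 * (fM * n) * c ≤ fM ^ 2 * V ^ 2 * n ^ 2 + c ^ 2 / V ^ 2 := by
    intro c
    have h := sq_nonneg (fM * V * n - c / V)
    have e : (fM * V * n - c / V) ^ 2
        = fM ^ 2 * V ^ 2 * n ^ 2 + c ^ 2 / V ^ 2 - 2 * (fM * n) * c := by field_simp; ring
    linarith
  have e1 := hy |a|
  rw [sq_abs] at e1
  have e2 := hy (W * (γ + ℓ * n))
  have e3 := hy (m * V)
  have e4 : (m * V) ^ 2 / V ^ 2 = m ^ 2 := by field_simp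
  have e5 : (W * (γ + ℓ * n)) ^ 2 / V ^ 2
      ≤ 2 * W ^ 2 / V ^ 2 * γ ^ 2 + 2 * (ℓ ^ 2 * W ^ 2 / V ^ 2) * n ^ 2 := by
    have h := mul_nonneg (div_nonneg (sq_nonneg W) (sq_nonneg V)) (sq_nonneg (γ - ℓ * n))
    have e : W ^ 2 / V ^ 2 * (γ - ℓ * n) ^ 2
        = 2 * W ^ 2 / V ^ 2 * γ ^ 2 + 2 * (ℓ ^ 2 * W ^ 2 / V ^ 2) * n ^ 2
          - (W * (γ + ℓ * n)) ^ 2 / V ^ 2 := by field_simp; ring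
    linarith
  linarith

/-- The reaction terms at a fixed time and a fixed `x`, tested with `2u` in `L²(0,π)`. Here `p` is
`u`, `q` is `u_y`, `g₀` is `g(·, 0)`, `gu` is `g(·, u)`, `fy` is `f` and `F` is `(f, ω)`. The bound on
`f` gives `|f h| ≤ f_M |B| / √π` with `B` the numerator of `h`; Cauchy–Schwarz bounds `|B|`, and
`young_sum` absorbs `u_y` with coefficient exactly `1`. No measurability of `gu` is needed, since its
inner product with `ω` is bounded through a majorant. -/
lemma section_estimate {ω ω' p q g₀ gu fy : ℝ → ℝ} {a F fM ℓ : ℝ}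
    (hω : ContinuousOn ω (Set.Icc 0 π)) (hω' : ContinuousOn ω' (Set.Icc 0 π))
    (hω'_pos : 0 < l2sq ω') (hfM : 0 < fM) (hℓ : 0 < ℓ)
    (hp : ContinuousOn p (Set.Icc 0 π)) (hq : ContinuousOn q (Set.Icc 0 π))
    (hg : ContinuousOn g₀ (Set.Icc 0 π))
    (hgu : ∀ y ∈ Set.Icc (0:ℝ) π, |gu y - g₀ y| ≤ ℓ * |p y|)
    (hf : ∀ y ∈ Set.Icc (0:ℝ) π, |fy y| ≤ fM / √π * |F|)
    (hint : IntegrableOn (fun y => 2 * (p y * (gu y + fy y * ((a - l2ip gu ω + l2ip q ω') / F))))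
      (Set.Ioo 0 π)) :
    ∫ y in Set.Ioo 0 π, 2 * (p y * (gu y + fy y * ((a - l2ip gu ω + l2ip q ω') / F)))
      ≤ l2sq q + 2 * (ℓ ^ 2 * l2sq ω / l2sq ω' + (3 / 2) * fM ^ 2 * l2sq ω' + ℓ + 1 / 2) * l2sq p
        + ((1 + 2 * l2sq ω / l2sq ω') * l2sq g₀ + a ^ 2 / l2sq ω') := by
  set B := a - l2ip gu ω + l2ip q ω' with hB
  have hgub : ∀ y ∈ Set.Icc (0:ℝ) π, |gu y| ≤ |g₀ y| + ℓ * |p y| := by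
    intro y hy
    have h1 := hgu y hy
    have h2 := abs_sub_abs_le_abs_sub (gu y) (g₀ y)
    linarith
  have hπ : 0 < √π := Real.sqrt_pos.2 Real.pi_pos
  -- bounds for the two inner products in the numerator
  have hqω : |l2ip q ω'| ≤ √(l2sq q) * √(l2sq ω') := abs_setIntegral_mul_le hq hω'
  have hgω : |l2ip gu ω| ≤ √(l2sq ω) * (√(l2sq g₀) + ℓ * √(l2sq p)) := by
    have i1 : IntegrableOn (fun y => |g₀ y| * |ω y|) (Set.Ioo 0 π) :=
      integrableOn_Ioo_of_continuousOn (hg.abs.mul hω.abs)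
    have i2 : IntegrableOn (fun y => ℓ * (|p y| * |ω y|)) (Set.Ioo 0 π) :=
      (integrableOn_Ioo_of_continuousOn (hp.abs.mul hω.abs)).const_mul _
    have h1 : |l2ip gu ω| ≤ ∫ y in Set.Ioo 0 π, (|g₀ y| * |ω y| + ℓ * (|p y| * |ω y|)) := by
      rw [← Real.norm_eq_abs]
      refine norm_integral_le_of_norm_le (i1.add i2) ?_
      filter_upwards [ae_restrict_mem measurableSet_Ioo] with y hy
      rw [Real.norm_eq_abs, abs_mul]
      have := mul_le_mul_of_nonneg_right (hgub y (Set.Ioo_subset_Icc_self hy)) (abs_nonneg (ω y))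
      linarith
    rw [integral_add i1 i2, integral_const_mul] at h1
    have h2 := (le_abs_self _).trans (abs_setIntegral_mul_le hg.abs hω.abs)
    have h3 := (le_abs_self _).trans (abs_setIntegral_mul_le hp.abs hω.abs)
    rw [l2sq_abs, l2sq_abs] at h2 h3
    have h4 := mul_le_mul_of_nonneg_left h3 hℓ.le
    linarith
  have hBb : |B| ≤ |a| + √(l2sq ω) * (√(l2sq g₀) + ℓ * √(l2sq p)) + √(l2sq q) * √(l2sq ω') := by
    have h1 := abs_add_le (a - l2ip gu ω) (l2ip q ω')
    have h2 := abs_sub a (l2ip gu ω)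
    rw [hB]; linarith
  have hpabs : ∫ y in Set.Ioo 0 π, |p y| ≤ √(l2sq p) * √π := by
    have h1 := (le_abs_self _).trans (abs_setIntegral_mul_le hp.abs (continuousOn_const (c := 1)))
    rw [l2sq_abs, l2sq_one] at h1
    simpa using h1
  have i1 : IntegrableOn (fun y => (1 + 2 * ℓ) * p y ^ 2) (Set.Ioo 0 π) :=
    (integrableOn_Ioo_of_continuousOn (hp.pow 2)).const_mul _
  have i2 : IntegrableOn (fun y => g₀ y ^ 2) (Set.Ioo 0 π) :=
    integrableOn_Ioo_of_continuousOn (hg.pow 2)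
  have i3 : IntegrableOn (fun y => (2 * (fM / √π * |B|)) * |p y|) (Set.Ioo 0 π) :=
    (integrableOn_Ioo_of_continuousOn hp.abs).const_mul _
  have i12 : IntegrableOn (fun y => (1 + 2 * ℓ) * p y ^ 2 + g₀ y ^ 2) (Set.Ioo 0 π) := i1.add i2
  have hmono : ∫ y in Set.Ioo 0 π, 2 * (p y * (gu y + fy y * (B / F)))
      ≤ ∫ y in Set.Ioo 0 π, ((1 + 2 * ℓ) * p y ^ 2 + g₀ y ^ 2
        + (2 * (fM / √π * |B|)) * |p y|) := by
    refine setIntegral_mono_on hint (i12.add i3) measurableSet_Ioo fun y hy => ?_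
    have hy' := Set.Ioo_subset_Icc_self hy
    have h1 : |fy y * (B / F)| ≤ fM / √π * |B| := by
      rw [abs_mul, abs_div]
      -- for `F = 0` the quotient is `0` by convention and the bound is trivial
      by_cases hF : F = 0
      · simp [hF]; positivity
      · calc |fy y| * (|B| / |F|) ≤ (fM / √π * |F|) * (|B| / |F|) :=
              mul_le_mul_of_nonneg_right (hf y hy') (by positivity)
          _ = fM / √π * |B| := by
              have : |F| ≠ 0 := abs_ne_zero.2 hF
              field_simp
    have h2 : p y * (gu y + fy y * (B / F))
        ≤ |p y| * (|g₀ y| + ℓ * |p y| + fM / √π * |B|) := by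
      refine (le_abs_self _).trans ?_
      rw [abs_mul]
      refine mul_le_mul_of_nonneg_left ?_ (abs_nonneg _)
      exact (abs_add_le _ _).trans (add_le_add (hgub y hy') h1)
    have h3 := sq_nonneg (|p y| - |g₀ y|)
    have h4 := sq_abs (p y)
    have h5 := sq_abs (g₀ y)
    nlinarith
  refine hmono.trans ?_
  rw [integral_add i12 i3, integral_add i1 i2, integral_const_mul, integral_const_mul]
  have h6 : (2 * (fM / √π * |B|)) * ∫ y in Set.Ioo 0 π, |p y| ≤ 2 * fM * |B| * √(l2sq p) := by
    calc _ ≤ (2 * (fM / √π * |B|)) * (√(l2sq p) * √π) :=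
          mul_le_mul_of_nonneg_left hpabs (by positivity)
      _ = _ := by field_simp
  have h7 := young_sum (Real.sqrt_pos.2 hω'_pos)
    (mul_nonneg hfM.le (Real.sqrt_nonneg (l2sq p))) hBb
  rw [Real.sq_sqrt (l2sq_nonneg _), Real.sq_sqrt (l2sq_nonneg _), Real.sq_sqrt (l2sq_nonneg _),
    Real.sq_sqrt (l2sq_nonneg _), Real.sq_sqrt (l2sq_nonneg _)] at h7
  change (1 + 2 * ℓ) * l2sq p + l2sq g₀ + _ ≤ _
  linarith

/-! ### The energy inequality at a fixed time -/

section Space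

variable {E : Type*} [NormedAddCommGroup E] [NormedSpace ℝ E]

/-- A function that is `C²` on a neighbourhood of a compact set and vanishes off that set is `C²`
everywhere, so integration by parts can be carried out on the whole space. -/
lemma contDiff_of_contDiffOn_of_support {U : E → ℝ} {S D K : Set E}
    (hS : ContDiffOn ℝ 2 U S) (hD : IsOpen D) (hDS : D ⊆ S) (hK : IsCompact K) (hKD : K ⊆ D)
    (h0 : ∀ p ∉ K, U p = 0) : ContDiff ℝ 2 U := by
  rw [contDiff_iff_contDiffAt]
  intro p
  by_cases hp : p ∈ K
  · exact hS.contDiffAt (Filter.mem_of_superset (hD.mem_nhds (hKD hp)) hDS)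
  · have : U =ᶠ[nhds p] fun _ => 0 := by
      filter_upwards [hK.isClosed.isOpen_compl.mem_nhds hp] with r hr using h0 r hr
    exact contDiffAt_const.congr_of_eventuallyEq this

lemma deriv_comp_curve {U : E → ℝ} (hU : ContDiff ℝ 2 U) {c : ℝ → E} {v : E}
    (hc : ∀ r, HasDerivAt c v r) :
    deriv (fun r => U (c r)) = fun r => fderiv ℝ U (c r) v := by
  ext r
  exact (((hU.differentiable (by norm_num)) (c r)).hasFDerivAt.comp_hasDerivAt r (hc r)).deriv

lemma contDiff_fderiv_apply {U : E → ℝ} (hU : ContDiff ℝ 2 U) (v : E) :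
    ContDiff ℝ 1 (fun p => fderiv ℝ U p v) :=
  (hU.fderiv_right (m := 1) (by norm_num)).clm_apply contDiff_const

lemma iteratedDeriv_two_comp_curve {U : E → ℝ} (hU : ContDiff ℝ 2 U) {c : ℝ → E} {v : E}
    (hc : ∀ r, HasDerivAt c v r) (r : ℝ) :
    iteratedDeriv 2 (fun r => U (c r)) r
      = fderiv ℝ (fun p => fderiv ℝ U p v) (c r) v := by
  rw [iteratedDeriv_succ, iteratedDeriv_one, deriv_comp_curve hU hc]
  exact ((((contDiff_fderiv_apply hU v).differentiable (by norm_num))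
    (c r)).hasFDerivAt.comp_hasDerivAt r (hc r)).deriv

variable [MeasurableSpace E] [BorelSpace E]

lemma integrable_mul_second_deriv {μ : Measure E} [μ.IsAddHaarMeasure]
    {U : E → ℝ} (hU : ContDiff ℝ 2 U) (hs : HasCompactSupport U) (v : E) :
    Integrable (fun p => U p * fderiv ℝ (fun p => fderiv ℝ U p v) p v) μ := by
  have h1 := contDiff_fderiv_apply hU v
  have h2 : Continuous (fun p => fderiv ℝ (fun p => fderiv ℝ U p v) p v) :=
    (h1.continuous_fderiv (by norm_num)).clm_apply continuous_const
  exact (hU.continuous.mul h2).integrable_of_hasCompactSupport hs.mul_right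

lemma integrable_deriv_sq {μ : Measure E} [μ.IsAddHaarMeasure]
    {U : E → ℝ} (hU : ContDiff ℝ 2 U) (hs : HasCompactSupport U) (v : E) :
    Integrable (fun p => fderiv ℝ U p v ^ 2) μ := by
  have h1 := (contDiff_fderiv_apply hU v).continuous
  have h3 : HasCompactSupport (fun p => fderiv ℝ U p v) := hs.fderiv_apply (𝕜 := ℝ) v
  have : Integrable (fun p => fderiv ℝ U p v * fderiv ℝ U p v) μ :=
    (h1.mul h1).integrable_of_hasCompactSupport h3.mul_right
  simpa only [sq] using this

lemma integral_mul_second_deriv [FiniteDimensional ℝ E] {μ : Measure E} [μ.IsAddHaarMeasure]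
    {U : E → ℝ} (hU : ContDiff ℝ 2 U) (hs : HasCompactSupport U) (v : E) :
    ∫ p, U p * fderiv ℝ (fun p => fderiv ℝ U p v) p v ∂μ = -∫ p, fderiv ℝ U p v ^ 2 ∂μ := by
  have h1 := contDiff_fderiv_apply hU v
  rw [integral_mul_fderiv_eq_neg_fderiv_mul_of_integrable]
  · simp only [sq]
  · simpa only [sq] using integrable_deriv_sq (μ := μ) hU hs v
  · exact integrable_mul_second_deriv hU hs v
  · exact (hU.continuous.mul h1.continuous).integrable_of_hasCompactSupport hs.mul_right
  · exact fun p _ => hU.differentiable (by norm_num) p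
  · exact fun p _ => h1.differentiable (by norm_num) p

/-- Integration by parts `∫_D U ∂_v∂_v U = -∫_D (∂_v U)²` for `U` with compact support in `D`. -/
lemma setIntegral_mul_second_deriv [FiniteDimensional ℝ E] {μ : Measure E} [μ.IsAddHaarMeasure]
    {U : E → ℝ} (hU : ContDiff ℝ 2 U) {K D : Set E} (hK : IsCompact K)
    (hKD : K ⊆ D) (h0 : ∀ p ∉ K, U p = 0) (v : E) :
    ∫ p in D, U p * fderiv ℝ (fun p => fderiv ℝ U p v) p v ∂μ
      = -∫ p in D, fderiv ℝ U p v ^ 2 ∂μ := by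
  have hs : HasCompactSupport U := HasCompactSupport.intro hK h0
  have ht : tsupport U ⊆ K := closure_minimal
    (fun p hp => by by_contra h; exact hp (h0 p h)) hK.isClosed
  rw [setIntegral_eq_integral_of_forall_compl_eq_zero, integral_mul_second_deriv hU hs,
    setIntegral_eq_integral_of_forall_compl_eq_zero]
  · intro p hp
    have : fderiv ℝ U p = 0 := by
      by_contra h
      exact hp (hKD (ht (support_fderiv_subset ℝ h)))
    simp [this]
  · intro p hp
    rw [h0 p fun h => hp (hKD h), zero_mul]

end Space

/-- The energy inequality at a fixed time, where `U` is the solution and `C` its Caputo derivative.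
The equation is multiplied by `2U` and integrated over `D`; the second derivatives produce twice the
squared gradients, and `section_estimate`, integrated in `x`, bounds the reaction terms at the
expense of one of the two copies of `‖u_y‖²`. The integrability of the reaction terms is read off
from the equation. -/
lemma spatial_estimate {n : ℕ} {G : Set (Fin n → ℝ)} (hGopen : IsOpen G)
    (hGbdd : Bornology.IsBounded G) {ω ω' : ℝ → ℝ}
    (hω : ContinuousOn ω (Set.Icc 0 π)) (hω' : ContinuousOn ω' (Set.Icc 0 π))
    (hω'_pos : 0 < l2sq ω') {f_M ℓ₀ : ℝ} (hfM : 0 < f_M) (hℓ₀ : 0 < ℓ₀)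
    {f : (Fin n → ℝ) → ℝ → ℝ}
    (hf_bd : ∀ x ∈ closure G, ∀ y ∈ Set.Icc (0:ℝ) π,
      |f x y| ≤ (f_M / Real.sqrt π) * |l2ip (f x) ω|)
    {g : (Fin n → ℝ) → ℝ → ℝ → ℝ}
    (hg_cont : ContinuousOn (fun p : (Fin n → ℝ) × ℝ => g p.1 p.2 0)
      (closure G ×ˢ Set.Icc 0 π))
    (hg_lip : ∀ x ∈ closure G, ∀ y ∈ Set.Icc (0:ℝ) π,
      ∀ u v : ℝ, |g x y u - g x y v| ≤ ℓ₀ * |u - v|)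
    {a : (Fin n → ℝ) → ℝ} (ha_cont : ContinuousOn a (closure G))
    {U C : (Fin n → ℝ) → ℝ → ℝ}
    (hU_space : ContDiffOn ℝ 2 (fun p : (Fin n → ℝ) × ℝ => U p.1 p.2)
        (closure G ×ˢ Set.Icc 0 π))
    {K : Set ((Fin n → ℝ) × ℝ)} (hK : IsCompact K) (hKD : K ⊆ G ×ˢ Set.Ioo 0 π)
    (h0 : ∀ p : (Fin n → ℝ) × ℝ, p ∉ K → U p.1 p.2 = 0)
    (hPDE : ∀ x ∈ G, ∀ y ∈ Set.Ioo (0:ℝ) π,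
      C x y - (∑ i, iteratedDeriv 2 (fun s => U (Function.update x i s) y) (x i))
        - iteratedDeriv 2 (U x) y
      = g x y (U x y)
        + f x y *
          ((a x - l2ip (fun z => g x z (U x z)) ω
              + l2ip (fun z => deriv (U x) z) ω') / l2ip (f x) ω))
    (hC : Integrable (fun p : (Fin n → ℝ) × ℝ => U p.1 p.2 * C p.1 p.2)
      ((volume.restrict G).prod (volume.restrict (Set.Ioo 0 π)))) :
    2 * (∫ x in G, ∫ y in Set.Ioo (0:ℝ) π,
          ∑ i, (deriv (fun r => U (Function.update x i r) y) (x i)) ^ 2)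
      + (∫ x in G, ∫ y in Set.Ioo (0:ℝ) π, (deriv (U x) y) ^ 2)
      + ∫ p, 2 * (U p.1 p.2 * C p.1 p.2)
          ∂((volume.restrict G).prod (volume.restrict (Set.Ioo 0 π)))
    ≤ 2 * (ℓ₀ ^ 2 * l2sq ω / l2sq ω' + (3 / 2) * f_M ^ 2 * l2sq ω' + ℓ₀ + 1 / 2) *
          (∫ x in G, ∫ y in Set.Ioo (0:ℝ) π, (U x y) ^ 2)
        + ((1 + 2 * l2sq ω / l2sq ω') *
                (∫ x in G, ∫ y in Set.Ioo (0:ℝ) π, (g x y 0) ^ 2)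
              + (∫ x in G, (a x) ^ 2) / l2sq ω') := by
  set D : Set ((Fin n → ℝ) × ℝ) := G ×ˢ Set.Ioo 0 π with hD
  set μ := (volume.restrict G).prod (volume.restrict (Set.Ioo (0:ℝ) π)) with hμ
  have hμD : μ = (volume : Measure ((Fin n → ℝ) × ℝ)).restrict D := by
    rw [hμ, Measure.prod_restrict]; rfl
  have : (volume : Measure ((Fin n → ℝ) × ℝ)).IsAddHaarMeasure :=
    Measure.prod.instIsAddHaarMeasure volume volume
  have hDopen : IsOpen D := hGopen.prod isOpen_Ioo
  have hcG : IsCompact (closure G) := hGbdd.isCompact_closure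
  have hDS : D ⊆ closure G ×ˢ Set.Icc 0 π :=
    Set.prod_mono subset_closure Set.Ioo_subset_Icc_self
  set V : (Fin n → ℝ) × ℝ → ℝ := fun p => U p.1 p.2 with hV
  have hVc : ContDiff ℝ 2 V := contDiff_of_contDiffOn_of_support hU_space hDopen hDS hK hKD h0
  have hVs : HasCompactSupport V := HasCompactSupport.intro hK h0
  -- classical partial derivatives as directional derivatives of `V`
  set e : Fin n → (Fin n → ℝ) × ℝ := fun i => (Pi.single i 1, 0) with he
  set e' : (Fin n → ℝ) × ℝ := (0, 1) with he'
  have hcx : ∀ (i : Fin n) (x : Fin n → ℝ) (y r : ℝ),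
      HasDerivAt (fun r => (Function.update x i r, y)) (e i) r := fun i x y r =>
    (hasDerivAt_update x i r).prodMk (hasDerivAt_const r y)
  have hcy : ∀ (x : Fin n → ℝ) (r : ℝ), HasDerivAt (fun r => (x, r)) e' r := fun x r =>
    (hasDerivAt_const r x).prodMk (hasDerivAt_id r)
  have dx : ∀ (i : Fin n) (x : Fin n → ℝ) (y : ℝ),
      deriv (fun r => U (Function.update x i r) y) (x i) = fderiv ℝ V (x, y) (e i) := by
    intro i x y
    have := congrFun (deriv_comp_curve hVc (hcx i x y)) (x i)
    simpa [hV] using this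
  have dy : ∀ (x : Fin n → ℝ) (y : ℝ), deriv (U x) y = fderiv ℝ V (x, y) e' := fun x y =>
    congrFun (deriv_comp_curve hVc (hcy x)) y
  have dxx : ∀ (i : Fin n) (x : Fin n → ℝ) (y : ℝ),
      iteratedDeriv 2 (fun r => U (Function.update x i r) y) (x i)
        = fderiv ℝ (fun p => fderiv ℝ V p (e i)) (x, y) (e i) := by
    intro i x y
    have := iteratedDeriv_two_comp_curve hVc (hcx i x y) (x i)
    simpa [hV] using this
  have dyy : ∀ (x : Fin n → ℝ) (y : ℝ),
      iteratedDeriv 2 (U x) y = fderiv ℝ (fun p => fderiv ℝ V p e') (x, y) e' := fun x y =>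
    iteratedDeriv_two_comp_curve hVc (hcy x) y
  -- integrability over `D`
  have isq : ∀ v, Integrable (fun p => fderiv ℝ V p v ^ 2) μ := fun v => by
    rw [hμD]; exact (integrable_deriv_sq hVc hVs v).integrableOn
  have imul : ∀ v, Integrable (fun p => V p * fderiv ℝ (fun p => fderiv ℝ V p v) p v) μ :=
    fun v => by rw [hμD]; exact (integrable_mul_second_deriv hVc hVs v).integrableOn
  have iV : Integrable (fun p => V p ^ 2) μ := by
    rw [hμD]
    have : Integrable (fun p => V p * V p) (volume.restrict D) :=
      ((hVc.continuous.mul hVc.continuous).integrable_of_hasCompactSupport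
        hVs.mul_right).integrableOn
    simpa only [sq] using this
  have ig : Integrable (fun p : (Fin n → ℝ) × ℝ => g p.1 p.2 0 ^ 2) μ := by
    rw [hμD]
    exact ((hg_cont.pow 2).integrableOn_compact (hcG.prod isCompact_Icc)).mono_set hDS
  have ia : IntegrableOn (fun x => a x ^ 2) G :=
    ((ha_cont.pow 2).integrableOn_compact hcG).mono_set subset_closure
  have ibp : ∀ v, ∫ p, V p * fderiv ℝ (fun p => fderiv ℝ V p v) p v ∂μ
      = -∫ p, fderiv ℝ V p v ^ 2 ∂μ := fun v => by
    rw [hμD]; exact setIntegral_mul_second_deriv hVc hK hKD h0 v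
  -- the reaction terms, obtained from the equation
  set R : (Fin n → ℝ) × ℝ → ℝ := fun p => 2 * (U p.1 p.2 * (g p.1 p.2 (U p.1 p.2)
        + f p.1 p.2 * ((a p.1 - l2ip (fun z => g p.1 z (U p.1 z)) ω
              + l2ip (fun z => deriv (U p.1) z) ω') / l2ip (f p.1) ω))) with hR
  have hRe : ∀ᵐ p ∂μ, 2 * (U p.1 p.2 * C p.1 p.2)
      - 2 * ∑ i, V p * fderiv ℝ (fun p => fderiv ℝ V p (e i)) p (e i)
      - 2 * (V p * fderiv ℝ (fun p => fderiv ℝ V p e') p e') = R p := by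
    rw [hμD]
    filter_upwards [ae_restrict_mem hDopen.measurableSet] with p hp
    have h1 := hPDE p.1 hp.1 p.2 hp.2
    simp only [dxx, dyy] at h1
    simp only [hR, ← h1, ← Finset.mul_sum, hV]
    ring
  have iS : Integrable (fun p => 2 * ∑ i, V p * fderiv ℝ (fun p => fderiv ℝ V p (e i)) p (e i)) μ :=
    (integrable_finsetSum _ fun i _ => imul (e i)).const_mul 2
  have iCS : Integrable (fun p => 2 * (U p.1 p.2 * C p.1 p.2)
      - 2 * ∑ i, V p * fderiv ℝ (fun p => fderiv ℝ V p (e i)) p (e i)) μ :=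
    (hC.const_mul 2).sub iS
  have iR : Integrable R μ := (iCS.sub ((imul e').const_mul 2)).congr hRe
  have hRint : ∫ p, R p ∂μ = ∫ p, 2 * (U p.1 p.2 * C p.1 p.2) ∂μ
      + 2 * (∑ i, ∫ p, fderiv ℝ V p (e i) ^ 2 ∂μ) + 2 * ∫ p, fderiv ℝ V p e' ^ 2 ∂μ := by
    have e1 : ∫ p, 2 * (V p * fderiv ℝ (fun p => fderiv ℝ V p e') p e') ∂μ
        = -(2 * ∫ p, fderiv ℝ V p e' ^ 2 ∂μ) := by
      rw [integral_const_mul, ibp]; ring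
    have e2 : ∫ p, 2 * ∑ i, V p * fderiv ℝ (fun p => fderiv ℝ V p (e i)) p (e i) ∂μ
        = -(2 * ∑ i, ∫ p, fderiv ℝ V p (e i) ^ 2 ∂μ) := by
      rw [integral_const_mul, integral_finsetSum _ fun i _ => imul (e i)]
      simp only [ibp, Finset.sum_neg_distrib]
      ring
    rw [← integral_congr_ae hRe, integral_sub iCS ((imul e').const_mul 2),
      integral_sub (hC.const_mul 2) iS, e1, e2]
    ring
  -- iterated integrals
  have hP : ∫ x in G, ∫ y in Set.Ioo (0:ℝ) π,
      ∑ i, (deriv (fun r => U (Function.update x i r) y) (x i)) ^ 2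
      = ∑ i, ∫ p, fderiv ℝ V p (e i) ^ 2 ∂μ := by
    simp only [dx]
    rw [← integral_finsetSum _ fun i _ => isq (e i),
      integral_prod _ (integrable_finsetSum _ fun i _ => isq (e i))]
  have hQ : ∫ x in G, ∫ y in Set.Ioo (0:ℝ) π, (deriv (U x) y) ^ 2
      = ∫ p, fderiv ℝ V p e' ^ 2 ∂μ := by
    simp only [dy]
    rw [integral_prod _ (isq e')]
  have jQ : IntegrableOn (fun x => l2sq (deriv (U x))) G := by
    have h : Integrable (fun x => ∫ y in Set.Ioo (0:ℝ) π, (deriv (U x) y) ^ 2)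
        (volume.restrict G) := by
      simp only [dy]
      exact (isq e').integral_prod_left
    exact h
  have jU : IntegrableOn (fun x => l2sq (U x)) G := iV.integral_prod_left
  have jg : IntegrableOn (fun x => l2sq (fun y => g x y 0)) G := ig.integral_prod_left
  obtain ⟨c₁, hc₁⟩ : ∃ c, c = 2 * (ℓ₀ ^ 2 * l2sq ω / l2sq ω' + (3 / 2) * f_M ^ 2 * l2sq ω'
    + ℓ₀ + 1 / 2) := ⟨_, rfl⟩
  obtain ⟨c₂, hc₂⟩ : ∃ c, c = 1 + 2 * l2sq ω / l2sq ω' := ⟨_, rfl⟩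
  rw [← hc₁, ← hc₂]
  have k1 : IntegrableOn (fun x => l2sq (deriv (U x)) + c₁ * l2sq (U x)) G :=
    jQ.add (jU.const_mul c₁)
  have k2 : IntegrableOn (fun x => c₂ * l2sq (fun y => g x y 0) + a x ^ 2 / l2sq ω') G :=
    (jg.const_mul c₂).add (ia.div_const _)
  have hmain : ∫ p, R p ∂μ ≤ ∫ x in G, (l2sq (deriv (U x)) + c₁ * l2sq (U x)
      + (c₂ * l2sq (fun y => g x y 0) + a x ^ 2 / l2sq ω')) := by
    rw [integral_prod _ iR]
    refine integral_mono_ae iR.integral_prod_left (k1.add k2) ?_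
    filter_upwards [iR.prod_right_ae, ae_restrict_mem hGopen.measurableSet] with x hx hxG
    have hxc := subset_closure hxG
    simp only [hc₁, hc₂]
    refine section_estimate (p := U x) (q := deriv (U x)) (g₀ := fun y => g x y 0)
      (gu := fun z => g x z (U x z)) (fy := f x) (a := a x) (F := l2ip (f x) ω)
      hω hω' hω'_pos hfM hℓ₀ ?_ ?_ ?_ ?_ (hf_bd x hxc) hx
    · exact (hVc.continuous.comp (by fun_prop : Continuous fun y : ℝ => (x, y))).continuousOn
    · have h1 : deriv (U x) = fun y => fderiv ℝ V (x, y) e' := funext (dy x)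
      rw [h1]
      exact ((contDiff_fderiv_apply hVc e').continuous.comp
        (by fun_prop : Continuous fun y : ℝ => (x, y))).continuousOn
    · exact hg_cont.comp (f := fun y : ℝ => (x, y)) (by fun_prop) fun y hy => ⟨hxc, hy⟩
    · intro y hy
      simpa using hg_lip x hxc y hy (U x y) 0
  have hsplit : ∫ x in G, (l2sq (deriv (U x)) + c₁ * l2sq (U x)
      + (c₂ * l2sq (fun y => g x y 0) + a x ^ 2 / l2sq ω'))
      = (∫ x in G, l2sq (deriv (U x))) + c₁ * (∫ x in G, l2sq (U x))
        + (c₂ * (∫ x in G, l2sq (fun y => g x y 0)) + (∫ x in G, a x ^ 2) / l2sq ω') := by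
    rw [integral_add k1 k2, integral_add jQ (jU.const_mul c₁),
      integral_add (jg.const_mul c₂) (ia.div_const _), integral_const_mul, integral_const_mul,
      integral_div]
  rw [hsplit, hRint] at hmain
  have hQ' : ∫ x in G, l2sq (deriv (U x)) = ∫ p, fderiv ℝ V p e' ^ 2 ∂μ := hQ
  rw [hQ'] at hmain
  rw [hP, hQ]
  simp only [l2sq] at hmain ⊢
  linarith

/-! ### Weighted integrability in time -/

lemma aestronglyMeasurable_and_bound_of_continuousOn {X : Type*} [MetricSpace X]
    [SecondCountableTopology X] [MeasurableSpace X] [BorelSpace X] {ν : Measure X} [SFinite ν]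
    {F : ℝ → X → ℝ} {T t : ℝ} (htT : t ≤ T) {S D : Set X} (hS : IsCompact S) (hDS : D ⊆ S)
    (hD : MeasurableSet D)
    (hF : ContinuousOn (fun q : ℝ × X => F q.1 q.2) (Set.Icc 0 T ×ˢ S)) :
    AEStronglyMeasurable (fun q : ℝ × X => F q.1 q.2)
      ((volume.restrict (Set.Ioc 0 t)).prod (ν.restrict D)) ∧
    ∃ C, ∀ᵐ q ∂((volume.restrict (Set.Ioc 0 t)).prod (ν.restrict D)), ‖F q.1 q.2‖ ≤ C := by
  have hsub : Set.Ioc 0 t ×ˢ D ⊆ Set.Icc 0 T ×ˢ S :=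
    Set.prod_mono (fun s hs => ⟨hs.1.le, hs.2.trans htT⟩) hDS
  have hm : MeasurableSet (Set.Ioc 0 t ×ˢ D) := measurableSet_Ioc.prod hD
  rw [Measure.prod_restrict]
  refine ⟨(hF.mono hsub).aestronglyMeasurable hm, ?_⟩
  obtain ⟨C, hC⟩ := (isCompact_Icc.prod hS).exists_bound_of_continuousOn hF
  refine ⟨C, ?_⟩
  filter_upwards [ae_restrict_mem hm] with q hq using hC q (hsub hq)

lemma integrableOn_kernel_mul_integral {X : Type*} [MeasurableSpace X] {μ : Measure X}
    [IsFiniteMeasure μ] {α t : ℝ} (hα : 0 < α) (ht : 0 < t) {F : ℝ → X → ℝ}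
    (hm : AEStronglyMeasurable (fun q : ℝ × X => F q.1 q.2)
      ((volume.restrict (Set.Ioc 0 t)).prod μ)) {C : ℝ}
    (hb : ∀ᵐ q ∂((volume.restrict (Set.Ioc 0 t)).prod μ), ‖F q.1 q.2‖ ≤ C) :
    IntegrableOn (fun s => (t - s) ^ (α - 1) * ∫ p, F s p ∂μ) (Set.Ioc 0 t) := by
  have h1 : IntervalIntegrable (fun s => (t - s) ^ (α - 1)) volume 0 t := by
    have := (intervalIntegral.intervalIntegrable_rpow' (a := 0) (b := t)
      (by linarith : -1 < α - 1)).comp_sub_left t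
    simpa using this.symm
  have h2 : Integrable (fun s => (t - s) ^ (α - 1)) (volume.restrict (Set.Ioc 0 t)) :=
    (intervalIntegrable_iff_integrableOn_Ioc_of_le ht.le).1 h1
  have h3 := ((h2.comp_fst μ).mul_bdd hm hb).integral_prod_left
  simp only [integral_const_mul] at h3
  exact h3

lemma rlInt_add_const_mul {α t : ℝ} (ht : 0 < t) (c : ℝ) {N M : ℝ → ℝ}
    (hN : IntegrableOn (fun s => (t - s) ^ (α - 1) * N s) (Set.Ioc 0 t))
    (hM : IntegrableOn (fun s => (t - s) ^ (α - 1) * M s) (Set.Ioc 0 t)) :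
    rlInt α (fun s => c * N s + M s) t = c * rlInt α N t + rlInt α M t := by
  simp only [rlInt, intervalIntegral.integral_of_le ht.le]
  have : ∫ s in Set.Ioc 0 t, (t - s) ^ (α - 1) * (c * N s + M s)
      = c * (∫ s in Set.Ioc 0 t, (t - s) ^ (α - 1) * N s)
        + ∫ s in Set.Ioc 0 t, (t - s) ^ (α - 1) * M s := by
    rw [← integral_const_mul, ← integral_add (hN.const_mul c) hM]
    congr 1; ext s; ring
  rw [this]; ring

/-- Energy estimate for a classical solution `u` of the nonlinear subdiffusion
equation `D_t^α u - Δ_x u - u_{yy} = g(t,x,y,u) + f(t,x,y) h(t,x)` with `h`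
given by the quotient formula: for every `t ∈ (0,T]`,
`‖u(t)‖² + 2 J^α(‖∇_x u‖²)(t) + J^α(‖u_y‖²)(t)
  ≤ ‖φ‖² + 2 L_ω² J^α(‖u‖²)(t) + J^α c₂(t)`. -/
theorem classical_solution_energy_estimate
    (T α : ℝ) (hT : 0 < T) (hα : 0 < α) (hα1 : α < 1) (n : ℕ) (hn : 1 ≤ n)
    (G : Set (Fin n → ℝ)) (hGopen : IsOpen G) (hGbdd : Bornology.IsBounded G)
    -- ω ∈ C¹([0,π]) with ω(0) = ω(π) = 0 and ‖ω'‖ > 0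
    (ω ω' : ℝ → ℝ)
    (hω_diff : ∀ y ∈ Set.Icc (0:ℝ) π, HasDerivAt ω (ω' y) y)
    (hω'_cont : ContinuousOn ω' (Set.Icc 0 π))
    (hω0 : ω 0 = 0) (hωπ : ω π = 0)
    (hω'_pos : 0 < l2sq ω')
    (f_M ℓ₀ : ℝ) (hfM : 0 < f_M) (hℓ₀ : 0 < ℓ₀)
    -- f continuous, (f(t,x,·),ω) ≠ 0, |f| ≤ (f_M/√π)|(f(t,x,·),ω)|
    (f : ℝ → (Fin n → ℝ) → ℝ → ℝ)
    (hf_cont : ContinuousOn (fun p : ℝ × (Fin n → ℝ) × ℝ => f p.1 p.2.1 p.2.2)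
      (Set.Icc 0 T ×ˢ closure G ×ˢ Set.Icc 0 π))
    (hf_ne : ∀ t ∈ Set.Icc (0:ℝ) T, ∀ x ∈ closure G, l2ip (f t x) ω ≠ 0)
    (hf_bd : ∀ t ∈ Set.Icc (0:ℝ) T, ∀ x ∈ closure G, ∀ y ∈ Set.Icc (0:ℝ) π,
      |f t x y| ≤ (f_M / Real.sqrt π) * |l2ip (f t x) ω|)
    -- g continuous and ℓ₀-Lipschitz in the last variable
    (g : ℝ → (Fin n → ℝ) → ℝ → ℝ → ℝ)
    (hg_cont : ∀ u : ℝ, ContinuousOn (fun p : ℝ × (Fin n → ℝ) × ℝ => g p.1 p.2.1 p.2.2 u)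
      (Set.Icc 0 T ×ˢ closure G ×ˢ Set.Icc 0 π))
    (hg_lip : ∀ t ∈ Set.Icc (0:ℝ) T, ∀ x ∈ closure G, ∀ y ∈ Set.Icc (0:ℝ) π,
      ∀ u v : ℝ, |g t x y u - g t x y v| ≤ ℓ₀ * |u - v|)
    -- a continuous
    (a : ℝ → (Fin n → ℝ) → ℝ)
    (ha_cont : ContinuousOn (fun p : ℝ × (Fin n → ℝ) => a p.1 p.2)
      (Set.Icc 0 T ×ˢ closure G))
    -- the classical solution u with time derivative ut and initial datum φ
    (u ut : ℝ → (Fin n → ℝ) → ℝ → ℝ) (φ : (Fin n → ℝ) → ℝ → ℝ)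
    (hφ_L2 : IntegrableOn (fun p : (Fin n → ℝ) × ℝ => (φ p.1 p.2) ^ 2)
      (G ×ˢ Set.Ioo 0 π))
    (hu_bdd : ∃ C : ℝ, ∀ t ∈ Set.Icc (0:ℝ) T, ∀ x ∈ closure G,
      ∀ y ∈ Set.Icc (0:ℝ) π, |u t x y| ≤ C)
    (hu_cont : ContinuousOn (fun p : ℝ × (Fin n → ℝ) × ℝ => u p.1 p.2.1 p.2.2)
      (Set.Icc 0 T ×ˢ closure G ×ˢ Set.Icc 0 π))
    (hu_space : ∀ t ∈ Set.Icc (0:ℝ) T,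
      ContDiffOn ℝ 2 (fun p : (Fin n → ℝ) × ℝ => u t p.1 p.2)
        (closure G ×ˢ Set.Icc 0 π))
    -- homogeneous Dirichlet boundary conditions via compact support in D
    (hu_supp : ∃ K : Set ((Fin n → ℝ) × ℝ), IsCompact K ∧ K ⊆ G ×ˢ Set.Ioo 0 π ∧
      ∀ t ∈ Set.Icc (0:ℝ) T, ∀ p : (Fin n → ℝ) × ℝ, p ∉ K → u t p.1 p.2 = 0)
    -- differentiability in time on (0,T], continuity and integrability of ∂ₜu
    (hu_t : ∀ t ∈ Set.Ioc (0:ℝ) T, ∀ x ∈ closure G, ∀ y ∈ Set.Icc (0:ℝ) π,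
      HasDerivAt (fun s => u s x y) (ut t x y) t)
    (hut_cont : ∀ x ∈ closure G, ∀ y ∈ Set.Icc (0:ℝ) π,
      ContinuousOn (fun s => ut s x y) (Set.Ioc 0 T))
    (hut_int : IntegrableOn (fun q : ℝ × ((Fin n → ℝ) × ℝ) => ut q.1 q.2.1 q.2.2)
      (Set.Ioc 0 T ×ˢ G ×ˢ Set.Ioo 0 π))
    -- initial condition
    (hu0 : ∀ x y, u 0 x y = φ x y)
    -- the equation D_t^α u - Δ_x u - u_{yy} = g(t,x,y,u) + f(t,x,y) h(t,x)
    (hPDE : ∀ t ∈ Set.Ioc (0:ℝ) T, ∀ x ∈ G, ∀ y ∈ Set.Ioo (0:ℝ) π,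
      caputo α (fun s => ut s x y) t
        - (∑ i, iteratedDeriv 2 (fun s => u t (Function.update x i s) y) (x i))
        - iteratedDeriv 2 (u t x) y
      = g t x y (u t x y)
        + f t x y *
          ((a t x - l2ip (fun z => g t x z (u t x z)) ω
              + l2ip (fun z => deriv (u t x) z) ω') / l2ip (f t x) ω))
    -- t ↦ ‖u(t,·,·)‖²_{L²(D)} is absolutely continuous on [0,T]
    (N' : ℝ → ℝ) (hN'_int : IntegrableOn N' (Set.Ioo 0 T))
    (hN_AC : ∀ t ∈ Set.Icc (0:ℝ) T,
      (∫ x in G, ∫ y in Set.Ioo (0:ℝ) π, (u t x y) ^ 2)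
        = (∫ x in G, ∫ y in Set.Ioo (0:ℝ) π, (u 0 x y) ^ 2)
          + ∫ s in (0:ℝ)..t, N' s) :
    ∀ t ∈ Set.Ioc (0:ℝ) T,
      (∫ x in G, ∫ y in Set.Ioo (0:ℝ) π, (u t x y) ^ 2)
        + 2 * rlInt α (fun s => ∫ x in G, ∫ y in Set.Ioo (0:ℝ) π,
            ∑ i, (deriv (fun r => u s (Function.update x i r) y) (x i)) ^ 2) t
        + rlInt α (fun s => ∫ x in G, ∫ y in Set.Ioo (0:ℝ) π,
            (deriv (u s x) y) ^ 2) t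
      ≤ (∫ x in G, ∫ y in Set.Ioo (0:ℝ) π, (φ x y) ^ 2)
        + 2 * (ℓ₀ ^ 2 * l2sq ω / l2sq ω' + (3 / 2) * f_M ^ 2 * l2sq ω'
            + ℓ₀ + 1 / 2) *
          rlInt α (fun s => ∫ x in G, ∫ y in Set.Ioo (0:ℝ) π, (u s x y) ^ 2) t
        + rlInt α
            (fun s => (1 + 2 * l2sq ω / l2sq ω') *
                (∫ x in G, ∫ y in Set.Ioo (0:ℝ) π, (g s x y 0) ^ 2)
              + (∫ x in G, (a s x) ^ 2) / l2sq ω') t := by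
  intro t ht
  have ht0 : 0 < t := ht.1
  have hcG : IsCompact (closure G) := hGbdd.isCompact_closure
  have hcS : IsCompact (closure G ×ˢ Set.Icc (0:ℝ) π) := hcG.prod isCompact_Icc
  have hDS : G ×ˢ Set.Ioo (0:ℝ) π ⊆ closure G ×ˢ Set.Icc (0:ℝ) π :=
    Set.prod_mono subset_closure Set.Ioo_subset_Icc_self
  have hDm : MeasurableSet (G ×ˢ Set.Ioo (0:ℝ) π) := hGopen.measurableSet.prod measurableSet_Ioo
  have hω : ContinuousOn ω (Set.Icc 0 π) := fun y hy =>
    (hω_diff y hy).continuousAt.continuousWithinAt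
  obtain ⟨K, hK, hKD, h0⟩ := hu_supp
  have hIcc : ∀ s ∈ Set.Ioc (0:ℝ) T, s ∈ Set.Icc (0:ℝ) T := fun s hs => ⟨hs.1.le, hs.2⟩
  obtain ⟨μ, hμ⟩ : ∃ μ : Measure ((Fin n → ℝ) × ℝ),
    μ = (volume.restrict G).prod (volume.restrict (Set.Ioo (0:ℝ) π)) := ⟨_, rfl⟩
  have hμD : μ = (volume : Measure ((Fin n → ℝ) × ℝ)).restrict (G ×ˢ Set.Ioo (0:ℝ) π) := by
    rw [hμ, Measure.prod_restrict]; rfl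
  have hGfin : IsFiniteMeasure (volume.restrict G) :=
    isFiniteMeasure_restrict.2 hGbdd.measure_lt_top.ne
  have hμfin : IsFiniteMeasure μ := by
    rw [hμ]; infer_instance
  have hμmem : ∀ᵐ p ∂μ, p ∈ G ×ˢ Set.Ioo (0:ℝ) π := by
    rw [hμD]; exact ae_restrict_mem hDm
  -- a continuous function on the closed cylinder is measurable and bounded
  have hcyl : ∀ F : ℝ → (Fin n → ℝ) × ℝ → ℝ,
      ContinuousOn (fun q : ℝ × (Fin n → ℝ) × ℝ => F q.1 q.2)
        (Set.Icc 0 T ×ˢ closure G ×ˢ Set.Icc 0 π) →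
      AEStronglyMeasurable (fun q : ℝ × (Fin n → ℝ) × ℝ => F q.1 q.2)
        ((volume.restrict (Set.Ioc 0 t)).prod μ) ∧
      ∃ C, ∀ᵐ q ∂((volume.restrict (Set.Ioc 0 t)).prod μ), ‖F q.1 q.2‖ ≤ C := by
    intro F hF
    rw [hμD]
    exact aestronglyMeasurable_and_bound_of_continuousOn ht.2 hcS hDS hDm hF
  have hslice : ∀ s ∈ Set.Icc (0:ℝ) T, ∀ F : ℝ → (Fin n → ℝ) × ℝ → ℝ,
      ContinuousOn (fun q : ℝ × (Fin n → ℝ) × ℝ => F q.1 q.2)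
        (Set.Icc 0 T ×ˢ closure G ×ˢ Set.Icc 0 π) →
      ContinuousOn (F s) (closure G ×ˢ Set.Icc 0 π) := by
    intro s hs F hF
    exact hF.comp (f := fun p => (s, p)) (by fun_prop) fun p hp => ⟨hs, hp⟩
  have hsliceInt : ∀ s ∈ Set.Icc (0:ℝ) T, ∀ F : ℝ → (Fin n → ℝ) × ℝ → ℝ,
      ContinuousOn (fun q : ℝ × (Fin n → ℝ) × ℝ => F q.1 q.2)
        (Set.Icc 0 T ×ˢ closure G ×ˢ Set.Icc 0 π) → Integrable (F s) μ := by
    intro s hs F hF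
    rw [hμD]
    exact ((hslice s hs F hF).integrableOn_compact hcS).mono_set hDS
  have hiter : ∀ s ∈ Set.Icc (0:ℝ) T, ∀ F : ℝ → (Fin n → ℝ) × ℝ → ℝ,
      ContinuousOn (fun q : ℝ × (Fin n → ℝ) × ℝ => F q.1 q.2)
        (Set.Icc 0 T ×ˢ closure G ×ˢ Set.Icc 0 π) →
      ∫ p, F s p ∂μ = ∫ x in G, ∫ y in Set.Ioo (0:ℝ) π, F s (x, y) := by
    intro s hs F hF
    have := hsliceInt s hs F hF
    subst hμ
    exact integral_prod _ this
  have hsq : ContinuousOn (fun q : ℝ × (Fin n → ℝ) × ℝ => u q.1 q.2.1 q.2.2 ^ 2)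
      (Set.Icc 0 T ×ˢ closure G ×ˢ Set.Icc 0 π) := hu_cont.pow 2
  have hgsq : ContinuousOn (fun q : ℝ × (Fin n → ℝ) × ℝ => g q.1 q.2.1 q.2.2 0 ^ 2)
      (Set.Icc 0 T ×ˢ closure G ×ˢ Set.Icc 0 π) := (hg_cont 0).pow 2
  have hasq : ContinuousOn (fun q : ℝ × (Fin n → ℝ) => a q.1 q.2 ^ 2)
      (Set.Icc 0 T ×ˢ closure G) := ha_cont.pow 2
  -- the weighted integrability of the data on the right-hand side
  have hkernel : ∀ F : ℝ → (Fin n → ℝ) × ℝ → ℝ,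
      ContinuousOn (fun q : ℝ × (Fin n → ℝ) × ℝ => F q.1 q.2)
        (Set.Icc 0 T ×ˢ closure G ×ˢ Set.Icc 0 π) →
      IntegrableOn (fun s => (t - s) ^ (α - 1)
        * ∫ x in G, ∫ y in Set.Ioo (0:ℝ) π, F s (x, y)) (Set.Ioc 0 t) := by
    intro F hF
    obtain ⟨hm, C, hb⟩ := hcyl F hF
    refine (integrableOn_kernel_mul_integral hα ht0 hm hb).congr_fun ?_ measurableSet_Ioc
    intro s hs
    simp only [hiter s ⟨hs.1.le, hs.2.trans ht.2⟩ F hF]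
  have hNint := hkernel (fun s p => u s p.1 p.2 ^ 2) hsq
  have hgint := hkernel (fun s p => g s p.1 p.2 0 ^ 2) hgsq
  have haint : IntegrableOn (fun s => (t - s) ^ (α - 1) * ∫ x in G, a s x ^ 2)
      (Set.Ioc 0 t) := by
    obtain ⟨hm, C, hb⟩ := aestronglyMeasurable_and_bound_of_continuousOn (ν := volume)
      (F := fun s x => a s x ^ 2) ht.2 hcG subset_closure hGopen.measurableSet hasq
    exact integrableOn_kernel_mul_integral hα ht0 hm hb
  have hMint : IntegrableOn (fun s => (t - s) ^ (α - 1) *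
      ((1 + 2 * l2sq ω / l2sq ω') * (∫ x in G, ∫ y in Set.Ioo (0:ℝ) π, (g s x y 0) ^ 2)
        + (∫ x in G, (a s x) ^ 2) / l2sq ω')) (Set.Ioc 0 t) := by
    refine ((hgint.const_mul (1 + 2 * l2sq ω / l2sq ω')).add
      (haint.div_const (l2sq ω'))).congr (Filter.Eventually.of_forall fun s => ?_)
    simp only [Pi.add_apply]
    ring
  -- the fractional energy inequality, integrated over `D`
  obtain ⟨hwm, C, hwb⟩ := hcyl (fun s p => u s p.1 p.2) hu_cont
  have hw' : Integrable (fun q : ℝ × (Fin n → ℝ) × ℝ => ut q.1 q.2.1 q.2.2)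
      ((volume.restrict (Set.Ioc 0 t)).prod μ) := by
    rw [hμD, Measure.prod_restrict]
    exact hut_int.mono_set (Set.prod_mono (Set.Ioc_subset_Ioc_right ht.2) subset_rfl)
  have hI := integrable_kernel_mul_caputo (w := fun s (p : (Fin n → ℝ) × ℝ) => u s p.1 p.2)
    (w' := fun s (p : (Fin n → ℝ) × ℝ) => ut s p.1 p.2) hα hα1 hw' hwm hwb
  have hd := integral_sq_sub_le_rlInt (w := fun s (p : (Fin n → ℝ) × ℝ) => u s p.1 p.2)
    (w' := fun s (p : (Fin n → ℝ) × ℝ) => ut s p.1 p.2) hα hα1 ht0 hw' hwm hwb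
    (by
      filter_upwards [hμmem] with p hp
      exact hu_cont.comp (f := fun s : ℝ => (s, p)) (by fun_prop)
        fun s hs => ⟨⟨hs.1, hs.2.trans ht.2⟩, hDS hp⟩)
    (by
      filter_upwards [hμmem] with p hp τ hτ
      exact hu_t τ ⟨hτ.1, hτ.2.trans ht.2⟩ p.1 (hDS hp).1 p.2 (hDS hp).2)
    (hsliceInt t (hIcc t ht) (fun s p => u s p.1 p.2 ^ 2) hsq)
    (hsliceInt 0 ⟨le_rfl, hT.le⟩ (fun s p => u s p.1 p.2 ^ 2) hsq)
  rw [hiter t (hIcc t ht) (fun s p => u s p.1 p.2 ^ 2) hsq,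
    hiter 0 ⟨le_rfl, hT.le⟩ (fun s p => u s p.1 p.2 ^ 2) hsq] at hd
  simp only [hu0] at hd
  have hIint : IntegrableOn (fun s => (t - s) ^ (α - 1) * ∫ p : (Fin n → ℝ) × ℝ,
      2 * (u s p.1 p.2 * caputo α (fun s => ut s p.1 p.2) s) ∂μ) (Set.Ioc 0 t) := by
    have h1 := (hI.const_mul 2).integral_prod_left
    refine h1.congr (Filter.Eventually.of_forall fun s => ?_)
    simp only [integral_const_mul]
    ring
  have hle : ∀ᵐ s ∂(volume.restrict (Set.Ioc 0 t)),
      2 * (∫ x in G, ∫ y in Set.Ioo (0:ℝ) π,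
          ∑ i, (deriv (fun r => u s (Function.update x i r) y) (x i)) ^ 2)
        + (∫ x in G, ∫ y in Set.Ioo (0:ℝ) π, (deriv (u s x) y) ^ 2)
        + (∫ p : (Fin n → ℝ) × ℝ,
            2 * (u s p.1 p.2 * caputo α (fun s => ut s p.1 p.2) s) ∂μ)
      ≤ 2 * (ℓ₀ ^ 2 * l2sq ω / l2sq ω' + (3 / 2) * f_M ^ 2 * l2sq ω' + ℓ₀ + 1 / 2) *
          (∫ x in G, ∫ y in Set.Ioo (0:ℝ) π, (u s x y) ^ 2)
        + ((1 + 2 * l2sq ω / l2sq ω') *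
                (∫ x in G, ∫ y in Set.Ioo (0:ℝ) π, (g s x y 0) ^ 2)
              + (∫ x in G, (a s x) ^ 2) / l2sq ω') := by
    filter_upwards [hI.prod_right_ae, ae_Ioc_lt t, ae_restrict_mem measurableSet_Ioc]
      with s hs hst hs0
    have hsT : s ∈ Set.Ioc 0 T := ⟨hs0.1, hs0.2.trans ht.2⟩
    have hsI := hIcc s hsT
    -- the weight is nonzero at `s < t`, so the slice itself is integrable
    have hk : (t - s) ^ (α - 1) ≠ 0 := (Real.rpow_pos_of_pos (sub_pos.2 hst.2) _).ne'
    have hC : Integrable (fun p : (Fin n → ℝ) × ℝ =>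
        u s p.1 p.2 * caputo α (fun s => ut s p.1 p.2) s) μ :=
      (integrable_const_mul_iff (IsUnit.mk0 _ hk) _).1 hs
    subst hμ
    exact spatial_estimate (C := fun x y => caputo α (fun s => ut s x y) s) hGopen hGbdd hω
      hω'_cont hω'_pos hfM hℓ₀ (hf_bd s hsI)
      (hslice s hsI (fun s p => g s p.1 p.2 0) (hg_cont 0)) (hg_lip s hsI)
      (ha_cont.comp (f := fun x => (s, x)) (by fun_prop) fun x hx => ⟨hsI, hx⟩)
      (hu_space s hsI) hK hKD (h0 s hsI) (hPDE s hsT) hC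
  have hRint := fun c : ℝ => (show IntegrableOn (fun s => (t - s) ^ (α - 1) *
      (c * (∫ x in G, ∫ y in Set.Ioo (0:ℝ) π, (u s x y) ^ 2)
        + ((1 + 2 * l2sq ω / l2sq ω') * (∫ x in G, ∫ y in Set.Ioo (0:ℝ) π, (g s x y 0) ^ 2)
          + (∫ x in G, (a s x) ^ 2) / l2sq ω'))) (Set.Ioc 0 t) from by
    refine ((hNint.const_mul c).add hMint).congr (Filter.Eventually.of_forall fun s => ?_)
    simp only [Pi.add_apply]
    ring)
  have hfin := energy_combine hα ht0
    (fun s => integral_nonneg fun x => integral_nonneg fun y =>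
      Finset.sum_nonneg fun i _ => sq_nonneg _)
    (fun s => integral_nonneg fun x => integral_nonneg fun y => sq_nonneg _)
    (hRint _) hIint hle hd
  rw [rlInt_add_const_mul ht0 _ hNint hMint] at hfin
  linarith
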